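/- There is no MSTD pair (A,B) of finite sets of integers with |A| = 3 and |B| = 4: for any such A, B, |A+B| ≤ |(A−B) ∪ (B−A)|. -/

import Mathlib

open Pointwise

/-!
Counting the pairs of `A × B` by their sum, with `#A = 3`, gives
`2 #(A + B) + E[A, B] = 3 #A #B + 2 T(A, B)`, where `E` is the additive energy and `T(A, B)` is the
number of sums with three representations. Since `E[A, -B] = E[A, B]`, it follows that
`#(A + B) - #(A - B) = T(A, B) - T(A, -B)`.

If `A` or `B` is centrally symmetric, then `A + B` is a translate of `B - A` or of `A - B`.
Otherwise two distinct translates of `-A` do not fit into the four points of `B`, so `T(A, B) ≤ 1`;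
in a counterexample therefore `T(A, B) = 1` and `A - B = B - A`. Hence some `Q = s - B` contains
`A`, and `A + Q` is centrally symmetric. The first gap of a sumset is the smaller of the first gaps
of its summands, and likewise for last gaps, so symmetry of `A + Q` is an equation between gaps of
`A` and of `Q`. As `A` is not symmetric and `Q` has just one point more, this equation forces `Q`,
and so `B`, to be symmetric.
-/

section

open Finset
open scoped Combinatorics.Additive

theorem exists_lt_lt_of_card_eq_three {α : Type*} [LinearOrder α] {A : Finset α} (hA : #A = 3) :
    ∃ a b c, a < b ∧ b < c ∧ A = {a, b, c} := by
  let f := A.orderEmbOfFin hA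
  refine ⟨f 0, f 1, f 2, f.strictMono (by decide), f.strictMono (by decide), ?_⟩
  calc A = univ.image f := (image_orderEmbOfFin_univ A hA).symm
    _ = {f 0, f 1, f 2} := by simp [Fin.univ_succ, image_insert]

variable {G : Type*} [AddCommGroup G]

/-- A finite set is centrally symmetric if some point reflection `x ↦ c - x` maps it to itself. By
finiteness, mapping it into itself is enough. -/
def IsCentrallySymmetric (A : Finset G) : Prop :=
  ∃ c, ∀ x ∈ A, c - x ∈ A

section Symmetry

variable [DecidableEq G] {A B : Finset G}

namespace IsCentrallySymmetric

theorem exists_vadd_neg_eq (hA : IsCentrallySymmetric A) : ∃ c : G, c +ᵥ -A = A := by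
  obtain ⟨c, hc⟩ := hA
  refine ⟨c, eq_of_subset_of_card_le (fun x hx ↦ ?_) (by simp)⟩
  obtain ⟨y, hy, rfl⟩ := mem_vadd_finset.1 hx
  simpa [sub_eq_add_neg] using hc (-y) (mem_neg'.1 hy)

theorem neg (hA : IsCentrallySymmetric A) : IsCentrallySymmetric (-A) := by
  obtain ⟨c, hc⟩ := hA
  refine ⟨-c, fun x hx ↦ mem_neg'.2 ?_⟩
  convert hc (-x) (mem_neg'.1 hx) using 1
  abel

theorem vadd (hA : IsCentrallySymmetric A) (t : G) : IsCentrallySymmetric (t +ᵥ A) := by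
  obtain ⟨c, hc⟩ := hA
  refine ⟨c + t + t, fun x hx ↦ ?_⟩
  obtain ⟨y, hy, rfl⟩ := mem_vadd_finset.1 hx
  refine mem_vadd_finset.2 ⟨c - y, hc y hy, ?_⟩
  simp only [vadd_eq_add]
  abel

theorem card_add_eq_card_sub (hA : IsCentrallySymmetric A) (B : Finset G) :
    #(A + B) = #(B - A) := by
  obtain ⟨c, hc⟩ := hA.exists_vadd_neg_eq
  calc #(A + B) = #(c +ᵥ (-A + B)) := by rw [← vadd_add_assoc, hc]
    _ = #(B - A) := by rw [card_vadd_finset, neg_add_eq_sub]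

end IsCentrallySymmetric

theorem isCentrallySymmetric_vadd_neg_iff {t : G} :
    IsCentrallySymmetric (t +ᵥ -A) ↔ IsCentrallySymmetric A :=
  ⟨fun h ↦ by simpa using (h.vadd (-t)).neg, fun h ↦ h.neg.vadd t⟩

theorem isCentrallySymmetric_triple {a b c : G} (h : a + c = b + b) :
    IsCentrallySymmetric {a, b, c} := by
  refine ⟨a + c, fun x hx ↦ ?_⟩
  simp only [mem_insert, mem_singleton] at hx ⊢
  rcases hx with rfl | rfl | rfl <;> grind

theorem isCentrallySymmetric_quadruple {a b c d : G} (h : a + d = b + c) :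
    IsCentrallySymmetric {a, b, c, d} := by
  refine ⟨a + d, fun x hx ↦ ?_⟩
  simp only [mem_insert, mem_singleton] at hx ⊢
  rcases hx with rfl | rfl | rfl | rfl <;> grind

theorem isCentrallySymmetric_sub_of_card_union_le (h : #((A - B) ∪ (B - A)) ≤ #(A - B)) :
    IsCentrallySymmetric (A - B) := by
  have hBA : B - A ⊆ A - B := by
    rw [eq_of_subset_of_card_le subset_union_left h]
    exact subset_union_right
  refine ⟨0, fun x hx ↦ hBA ?_⟩
  rwa [zero_sub, ← mem_neg', neg_sub]

end Symmetry

section FullSums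

variable [DecidableEq G] {A B : Finset G}

/-- The sums with the largest conceivable number `#A` of representations `a + b`: those `x` for
which `x - A ⊆ B`. -/
def fullSums (A B : Finset G) : Finset G :=
  {x ∈ A + B | A.addConvolution B x = #A}

theorem subset_vadd_neg_of_mem_fullSums {x : G} (hx : x ∈ fullSums A B) : A ⊆ x +ᵥ -B := by
  have hcard : #(A ∩ (x +ᵥ -B)) = #A := by
    rw [card_inter_vadd_neg]
    exact (mem_filter.1 hx).2
  exact inter_eq_left.1 (eq_of_subset_of_card_le inter_subset_left hcard.ge)

theorem addEnergy_neg_right (A B : Finset G) : E[A, -B] = E[A, B] := by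
  -- `a₁ + b₁ = a₂ + b₂` if and only if `a₁ - b₂ = a₂ - b₁`
  refine card_nbij' (fun x ↦ (x.1, -x.2.2, -x.2.1)) (fun x ↦ (x.1, -x.2.2, -x.2.1)) ?_ ?_
    (by simp [Set.LeftInvOn]) (by simp [Set.LeftInvOn])
  all_goals
    rintro ⟨⟨a₁, a₂⟩, b₁, b₂⟩ hx
    simp only [coe_filter, mem_product, Set.mem_ofPred_eq, mem_neg', neg_neg] at hx ⊢
    grind

theorem two_mul_card_add_add_addEnergy (hA : #A = 3) (B : Finset G) :
    2 * #(A + B) + E[A, B] = 3 * (#A * #B) + 2 * #(fullSums A B) := by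
  have hpairs : #A * #B = ∑ x ∈ A + B, A.addConvolution B x := by
    rw [← card_product]
    exact card_eq_sum_card_fiberwise fun z hz ↦
      add_mem_add (mem_product.1 hz).1 (mem_product.1 hz).2
  have henergy : E[A, B] = ∑ x ∈ A + B, A.addConvolution B x ^ 2 := addEnergy_eq_sum_sq' A B
  rw [hpairs, henergy, fullSums, card_filter, card_eq_sum_ones, mul_sum, mul_sum, mul_sum,
    ← sum_add_distrib, ← sum_add_distrib]
  refine sum_congr rfl fun x hx ↦ ?_
  have hpos : 0 < A.addConvolution B x := addConvolution_pos.2 hx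
  have hle : A.addConvolution B x ≤ 3 := hA ▸ addConvolution_le_card_left
  rw [hA]
  interval_cases A.addConvolution B x <;> rfl

theorem card_add_add_card_fullSums_neg (hA : #A = 3) (B : Finset G) :
    #(A + B) + #(fullSums A (-B)) = #(A - B) + #(fullSums A B) := by
  have hadd := two_mul_card_add_add_addEnergy hA B
  have hsub := two_mul_card_add_add_addEnergy hA (-B)
  rw [addEnergy_neg_right, card_neg, ← sub_eq_add_neg] at hsub
  omega

end FullSums

variable [LinearOrder G] [IsOrderedAddMonoid G]

section Translates

variable {A B : Finset G}

theorem sub_mem_of_vadd_subset {m t x : G} (ht : 0 < t) (hm : IsLeast (A : Set G) m) (hA : A ⊆ B)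
    (htA : t +ᵥ A ⊆ B) (hcard : #B ≤ #A + 1) (hx : x ∈ A) (hxm : x ≠ m) : x - t ∈ A := by
  have hmt : m ∉ t +ᵥ A := fun h ↦ by
    obtain ⟨y, hy, rfl⟩ := mem_vadd_finset.1 h
    exact (lt_add_of_pos_left y ht).not_ge (hm.2 hy)
  have hB : insert m (t +ᵥ A) = B := by
    refine eq_of_subset_of_card_le (insert_subset (hA hm.1) htA) ?_
    rwa [card_insert_of_notMem hmt, card_vadd_finset]
  have hxt : x ∈ insert m (t +ᵥ A) := hB ▸ hA hx
  obtain ⟨y, hy, rfl⟩ := mem_vadd_finset.1 ((mem_insert.1 hxt).resolve_left hxm)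
  simpa using hy

theorem isCentrallySymmetric_of_vadd_subset_of_pos {t : G} (ht : 0 < t) (hA : A ⊆ B)
    (htA : t +ᵥ A ⊆ B) (hcard : #B ≤ #A + 1) : IsCentrallySymmetric A := by
  rcases A.eq_empty_or_nonempty with rfl | hne
  · exact ⟨0, by simp⟩
  obtain ⟨m, hm⟩ : ∃ m, IsLeast (A : Set G) m := ⟨_, A.isLeast_min' hne⟩
  obtain ⟨M, hM⟩ : ∃ M, IsGreatest (A : Set G) M := ⟨_, A.isGreatest_max' hne⟩
  refine ⟨m + M, fun x hx ↦ ?_⟩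
  -- `A` is a progression with difference `t`: as `x` steps down, `m + M - x` steps up.
  refine Set.WellFoundedOn.induction A.isWF (mem_coe.2 hx) (P := fun x ↦ m + M - x ∈ A)
    fun x hx ih ↦ ?_
  by_cases hxm : x = m
  · rw [hxm, add_sub_cancel_left]
    exact hM.1
  have hprev : m + M - (x - t) ∈ A :=
    ih _ (sub_mem_of_vadd_subset ht hm hA htA hcard hx hxm) (sub_lt_self x ht)
  have hprev_ne : m + M - (x - t) ≠ m := by
    have hxM : x ≤ M := hM.2 hx
    grind
  convert sub_mem_of_vadd_subset ht hm hA htA hcard hprev hprev_ne using 1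
  abel

theorem isCentrallySymmetric_of_vadd_subset {t : G} (ht : t ≠ 0) (hA : A ⊆ B)
    (htA : t +ᵥ A ⊆ B) (hcard : #B ≤ #A + 1) : IsCentrallySymmetric A := by
  rcases ht.lt_or_gt with ht | ht
  · have : IsCentrallySymmetric (t +ᵥ A) :=
      isCentrallySymmetric_of_vadd_subset_of_pos (neg_pos.2 ht) htA (by simpa) (by simpa)
    simpa using this.vadd (-t)
  · exact isCentrallySymmetric_of_vadd_subset_of_pos ht hA htA hcard

theorem card_fullSums_le_one (hA : ¬IsCentrallySymmetric A) (hcard : #B ≤ #A + 1) :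
    #(fullSums A B) ≤ 1 := by
  refine card_le_one.2 fun x hx y hy ↦ by_contra fun hxy ↦ hA ?_
  have hsub : (x - y) +ᵥ A ⊆ x +ᵥ -B := by
    have h := vadd_finset_subset_vadd_finset (a := x - y) (subset_vadd_neg_of_mem_fullSums hy)
    rwa [vadd_vadd, sub_add_cancel] at h
  exact isCentrallySymmetric_of_vadd_subset (sub_ne_zero.2 hxy)
    (subset_vadd_neg_of_mem_fullSums hx) hsub (by simpa)

end Translates

section Gaps

variable {A B : Finset G} {g h : G}

/-- `g` is the difference between the smallest and the second smallest element of `A`. -/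
def IsFirstGap (A : Finset G) (g : G) : Prop :=
  ∃ a ∈ A, a + g ∈ A ∧ 0 < g ∧ ∀ x ∈ A, x = a ∨ a + g ≤ x

/-- `g` is the difference between the largest and the second largest element of `A`, encoded as the
first gap of `-A` so that facts about first gaps transfer. -/
def IsLastGap (A : Finset G) (g : G) : Prop :=
  IsFirstGap (-A) g

theorem IsFirstGap.unique (hg : IsFirstGap A g) (hh : IsFirstGap A h) : g = h := by
  obtain ⟨a, ha, hag, hg, hA⟩ := hg
  obtain ⟨b, hb, hbh, hh, hA'⟩ := hh
  have hab : a = b := by grind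
  subst hab
  grind

theorem IsFirstGap.vadd (hg : IsFirstGap A g) (t : G) : IsFirstGap (t +ᵥ A) g := by
  obtain ⟨a, ha, hag, hg, hA⟩ := hg
  refine ⟨t + a, vadd_mem_vadd_finset ha, ?_, hg, fun x hx ↦ ?_⟩
  · rw [add_assoc]
    exact vadd_mem_vadd_finset hag
  · obtain ⟨y, hy, rfl⟩ := mem_vadd_finset.1 hx
    simpa [add_assoc] using hA y hy

theorem IsFirstGap.add (hg : IsFirstGap A g) (hh : IsFirstGap B h) :
    IsFirstGap (A + B) (min g h) := by
  obtain ⟨a, ha, hag, hg, hA⟩ := hg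
  obtain ⟨b, hb, hbh, hh, hB⟩ := hh
  refine ⟨a + b, add_mem_add ha hb, ?_, lt_min hg hh, fun x hx ↦ ?_⟩
  · rcases min_choice g h with hmin | hmin <;> rw [hmin]
    · rw [add_right_comm]
      exact add_mem_add hag hb
    · rw [add_assoc]
      exact add_mem_add ha hbh
  · obtain ⟨y, hy, z, hz, rfl⟩ := mem_add.1 hx
    have := hA y hy
    have := hB z hz
    grind

theorem IsLastGap.add (hg : IsLastGap A g) (hh : IsLastGap B h) :
    IsLastGap (A + B) (min g h) := by
  rw [IsLastGap, neg_add]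
  exact IsFirstGap.add hg hh

theorem IsCentrallySymmetric.firstGap_eq_lastGap (hA : IsCentrallySymmetric A)
    (hg : IsFirstGap A g) (hh : IsLastGap A h) : g = h := by
  obtain ⟨c, hc⟩ := hA.exists_vadd_neg_eq
  exact hg.unique (hc ▸ IsFirstGap.vadd hh c)

theorem isLastGap_iff :
    IsLastGap A g ↔ ∃ a ∈ A, a - g ∈ A ∧ 0 < g ∧ ∀ x ∈ A, x = a ∨ x ≤ a - g := by
  have hneg : ∀ a x : G, (-x = -a ∨ -a + g ≤ -x) ↔ (x = a ∨ x ≤ a - g) := fun a x ↦ by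
    rw [neg_inj, neg_add_eq_sub, ← neg_sub, neg_le_neg_iff]
  constructor
  · rintro ⟨a, ha, hag, hg, hA⟩
    refine ⟨-a, mem_neg'.1 ha, ?_, hg, fun x hx ↦ ?_⟩
    · rwa [← neg_add', ← mem_neg']
    · rw [← hneg, neg_neg]
      exact hA (-x) (neg_mem_neg hx)
  · rintro ⟨a, ha, hag, hg, hA⟩
    refine ⟨-a, neg_mem_neg ha, ?_, hg, fun x hx ↦ ?_⟩
    · rw [neg_add_eq_sub, ← neg_sub]
      exact neg_mem_neg hag
    · have := (hneg a (-x)).2 (hA (-x) (mem_neg'.1 hx))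
      rwa [neg_neg] at this

theorem IsCentrallySymmetric.min_gap_eq {a b c : G} (hab : a < b) (hbc : b < c)
    (hadd : IsCentrallySymmetric ({a, b, c} + B)) (hg : IsFirstGap B g) (hh : IsLastGap B h) :
    min (b - a) g = min (c - b) h := by
  have hfirst : IsFirstGap {a, b, c} (b - a) := ⟨a, by grind⟩
  have hlast : IsLastGap {a, b, c} (c - b) := isLastGap_iff.2 ⟨c, by grind⟩
  exact hadd.firstGap_eq_lastGap (hfirst.add hg) (hlast.add hh)

theorem isCentrallySymmetric_of_add_of_subset (hA : #A = 3) (hB : #B = 4) (hAB : A ⊆ B)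
    (hasymm : ¬IsCentrallySymmetric A) (hadd : IsCentrallySymmetric (A + B)) :
    IsCentrallySymmetric B := by
  obtain ⟨a, b, c, hab, hbc, rfl⟩ := exists_lt_lt_of_card_eq_three hA
  obtain ⟨d, hd, rfl⟩ := exists_eq_insert_iff.2 ⟨hAB, by rw [hA, hB]⟩
  have hne : b - a ≠ c - b := fun h ↦ hasymm <| isCentrallySymmetric_triple <| by grind
  simp only [mem_insert, mem_singleton, not_or] at hd
  obtain ⟨hda, hdb, hdc⟩ := hd
  rcases lt_or_gt_of_ne hda with hda | had
  · have hgap := hadd.min_gap_eq hab hbc (g := a - d) (h := c - b) ⟨d, by grind⟩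
      (isLastGap_iff.2 ⟨c, by grind⟩)
    have hsum : d + c = a + b := by grind
    exact isCentrallySymmetric_quadruple hsum
  rw [insert_comm d a] at hadd ⊢
  rcases lt_or_gt_of_ne hdb with hdb | hbd
  · have hgap := hadd.min_gap_eq hab hbc (g := d - a) (h := c - b) ⟨a, by grind⟩
      (isLastGap_iff.2 ⟨c, by grind⟩)
    have hsum : a + c = d + b := by grind
    exact isCentrallySymmetric_quadruple hsum
  rw [insert_comm d b] at hadd ⊢
  rcases lt_or_gt_of_ne hdc with hdc | hcd
  · have hgap := hadd.min_gap_eq hab hbc (g := b - a) (h := c - d) ⟨a, by grind⟩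
      (isLastGap_iff.2 ⟨c, by grind⟩)
    have hsum : a + c = b + d := by grind
    exact isCentrallySymmetric_quadruple hsum
  · rw [pair_comm d c] at hadd ⊢
    have hgap := hadd.min_gap_eq hab hbc (g := b - a) (h := d - c) ⟨a, by grind⟩
      (isLastGap_iff.2 ⟨d, by grind⟩)
    have hsum : a + d = b + c := by grind
    exact isCentrallySymmetric_quadruple hsum

end Gaps

theorem stmt5_general (A B : Finset G) (hA : #A = 3) (hB : #B = 4) :
    #(A + B) ≤ #((A - B) ∪ (B - A)) := by
  by_contra! hlt
  have hsub : #(A - B) ≤ #((A - B) ∪ (B - A)) := card_le_card subset_union_left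
  have hsub' : #(B - A) ≤ #((A - B) ∪ (B - A)) := card_le_card subset_union_right
  have hA' : ¬IsCentrallySymmetric A := fun h ↦ by
    have := h.card_add_eq_card_sub B
    omega
  have hB' : ¬IsCentrallySymmetric B := fun h ↦ by
    have := h.card_add_eq_card_sub A
    rw [add_comm] at this
    omega
  have hcount := card_add_add_card_fullSums_neg hA B
  have hone : #(fullSums A B) ≤ 1 := card_fullSums_le_one hA' (by omega)
  obtain ⟨s, hs⟩ : (fullSums A B).Nonempty := card_pos.1 (by omega)
  have hdiff : IsCentrallySymmetric (A - B) :=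
    isCentrallySymmetric_sub_of_card_union_le (by omega)
  have hsum : IsCentrallySymmetric (A + (s +ᵥ -B)) := by
    rw [add_vadd_comm, ← sub_eq_add_neg]
    exact hdiff.vadd s
  have hQ : IsCentrallySymmetric (s +ᵥ -B) := isCentrallySymmetric_of_add_of_subset hA (by simpa)
    (subset_vadd_neg_of_mem_fullSums hs) hA' hsum
  exact hB' (isCentrallySymmetric_vadd_neg_iff.1 hQ)

end

theorem stmt5 (A B : Finset ℤ) (hA : A.card = 3) (hB : B.card = 4) :
    (A + B).card ≤ ((A - B) ∪ (B - A)).card :=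
  stmt5_general A B hA hB
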